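/- Let X be a compact metric space, Λ a compact metric space, and w : Λ × X → X a weakly hyperbolic IFS. Then the map Γ : Ω → X defined by Γ(σ) = lim_{n→∞} w_{σ₁…σₙ}(x) (for any x ∈ X; the limit exists and is independent of x) is continuous with respect to the product topology on Ω = Λ^ℕ. -/

import Mathlib

open Metric Set Filter Topology

/-- `seqComp w σ n = w_{σ₁} ∘ ⋯ ∘ w_{σₙ}` (with `σ i` denoting `σ_{i+1}`). -/
def seqComp {Λ X : Type*} (w : Λ → X → X) (σ : ℕ → Λ) : ℕ → X → X
  | 0 => id
  | n + 1 => seqComp w σ n ∘ w (σ n)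

/-!
Compactness of `X` makes `σ ↦ w_{σ₁…σₙ}(X)` upper hemicontinuous for each `n`. These images decrease
in `n` and shrink to the point `Γ σ`. Given a closed neighbourhood `U` of `Γ σ`, some
`w_{σ₁…σₙ}(X)` lies in the interior of `U`; then `w_{τ₁…τₙ}(X) ⊆ U` for all `τ` near `σ`, and
`Γ τ` belongs to the closure of `w_{τ₁…τₙ}(X)`, hence to `U`.
-/

section SetValuedMaps

variable {ι X Y Z : Type*}

theorem upperHemicontinuous_image [TopologicalSpace X] [TopologicalSpace Y] [TopologicalSpace Z]
    {f : Y → X → Z} {K : Set X} (hf : Continuous (Function.uncurry f)) (hK : IsCompact K) :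
    UpperHemicontinuous fun y => f y '' K := by
  rw [upperHemicontinuous_iff_forall_isOpen]
  intro y U hU hyU
  have tube : ∀ᶠ y' in 𝓝 y, ∀ x ∈ K, f y' x ∈ U :=
    hK.eventually_forall_of_forall_eventually fun x hx =>
      hf.continuousAt.eventually_mem (hU.mem_nhds (hyU (mem_image_of_mem _ hx)))
  exact tube.mono fun _ => image_subset_iff.mpr

theorem continuous_of_upperHemicontinuous_of_tendsto_smallSets [TopologicalSpace Y]
    [TopologicalSpace Z] [RegularSpace Z] {l : Filter ι} [l.NeBot] {F : ι → Y → Set Z} {g : Y → Z}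
    (hF : ∀ i, UpperHemicontinuous (F i)) (hg : ∀ i y, g y ∈ closure (F i y))
    (hlim : ∀ y, Tendsto (fun i => F i y) l (𝓝 (g y)).smallSets) :
    Continuous g := by
  refine continuous_iff_continuousAt.mpr fun y => ?_
  refine (closed_nhds_basis (g y)).tendsto_right_iff.mpr fun U ⟨hU, hUclosed⟩ => ?_
  obtain ⟨i, hi⟩ : ∃ i, F i y ⊆ interior U :=
    (tendsto_smallSets_iff.mp (hlim y) _ (interior_mem_nhds.mpr hU)).exists
  have hnear : ∀ᶠ y' in 𝓝 y, F i y' ⊆ interior U := (hF i).forall_isOpen y _ isOpen_interior hi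
  filter_upwards [hnear] with y' hy'
  exact closure_minimal (hy'.trans interior_subset) hUclosed (hg i y')

theorem tendsto_smallSets_of_tendsto_diam [PseudoMetricSpace X] {l : Filter ι} {s : ι → Set X}
    {u : ι → X} {a : X} (hs : ∀ i, Bornology.IsBounded (s i)) (hus : ∀ i, u i ∈ s i)
    (hdiam : Tendsto (fun i => diam (s i)) l (𝓝 0)) (hu : Tendsto u l (𝓝 a)) :
    Tendsto s l (𝓝 a).smallSets := by
  refine nhds_basis_ball.smallSets.tendsto_right_iff.mpr fun ε hε => ?_
  have hsum : Tendsto (fun i => diam (s i) + dist (u i) a) l (𝓝 0) := by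
    simpa only [add_zero] using hdiam.add (tendsto_iff_dist_tendsto_zero.mp hu)
  filter_upwards [hsum.eventually_lt_const hε] with i hi x hx
  calc
    dist x a ≤ dist x (u i) + dist (u i) a := dist_triangle _ _ _
    _ ≤ diam (s i) + dist (u i) a := by
      gcongr
      exact dist_le_diam_of_mem (hs i) hx (hus i)
    _ < ε := hi

end SetValuedMaps

section IteratedFunctionSystem

variable {Λ X : Type*}

theorem antitone_range_seqComp (w : Λ → X → X) (σ : ℕ → Λ) :
    Antitone fun n => range (seqComp w σ n) :=
  antitone_nat_of_succ_le fun _ => range_comp_subset_range _ _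

variable [TopologicalSpace X]

theorem continuous_uncurry_seqComp [TopologicalSpace Λ] {w : Λ → X → X}
    (hw : Continuous fun p : Λ × X => w p.1 p.2) (n : ℕ) :
    Continuous (Function.uncurry fun σ => seqComp w σ n) := by
  induction n with
  | zero => exact continuous_snd
  | succ n ih =>
    have hpair : Continuous fun p : (ℕ → Λ) × X => (p.1 n, p.2) := by fun_prop
    exact ih.comp (continuous_fst.prodMk (hw.comp hpair))

theorem upperHemicontinuous_range_seqComp [TopologicalSpace Λ] [CompactSpace X] {w : Λ → X → X}
    (hw : Continuous fun p : Λ × X => w p.1 p.2) (n : ℕ) :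
    UpperHemicontinuous fun σ => range (seqComp w σ n) := by
  simpa only [image_univ] using
    upperHemicontinuous_image (continuous_uncurry_seqComp hw n) isCompact_univ

theorem mem_closure_range_seqComp_of_tendsto {w : Λ → X → X} {σ : ℕ → Λ} {x y : X}
    (h : Tendsto (fun n => seqComp w σ n x) atTop (𝓝 y)) (n : ℕ) :
    y ∈ closure (range (seqComp w σ n)) :=
  mem_closure_of_tendsto h <| (eventually_ge_atTop n).mono fun _ hm =>
    antitone_range_seqComp w σ hm (mem_range_self x)

theorem stmt_3_general [TopologicalSpace Λ] [CompactSpace X] [RegularSpace X] {w : Λ → X → X}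
    (hw : Continuous fun p : Λ × X => w p.1 p.2) {Γ : (ℕ → Λ) → X}
    (hΓ : ∀ σ, Tendsto (fun n => range (seqComp w σ n)) atTop (𝓝 (Γ σ)).smallSets) :
    Continuous Γ := by
  have orbit_tendsto (σ : ℕ → Λ) : Tendsto (fun n => seqComp w σ n (Γ σ)) atTop (𝓝 (Γ σ)) :=
    (hΓ σ).of_smallSets (.of_forall fun _ => mem_range_self _)
  exact continuous_of_upperHemicontinuous_of_tendsto_smallSets
    (upperHemicontinuous_range_seqComp hw)
    (fun n σ => mem_closure_range_seqComp_of_tendsto (orbit_tendsto σ) n) hΓ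

end IteratedFunctionSystem

/-- The limit map `Γ(σ) = lim_n w_{σ₁…σₙ}(x)` of a weakly hyperbolic IFS on a
compact phase space is continuous on `Ω = Λ^ℕ` with the product topology. -/
theorem stmt_3 {Λ X : Type*} [MetricSpace Λ] [CompactSpace Λ]
    [MetricSpace X] [CompactSpace X]
    (w : Λ → X → X) (hw : Continuous fun p : Λ × X => w p.1 p.2)
    (hyp : ∀ σ : ℕ → Λ,
      Tendsto (fun n => diam (Set.range (seqComp w σ n))) atTop (𝓝 0))
    (Γ : (ℕ → Λ) → X)
    (hΓ : ∀ (σ : ℕ → Λ) (x : X),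
      Tendsto (fun n => seqComp w σ n x) atTop (𝓝 (Γ σ))) :
    Continuous Γ :=
  stmt_3_general hw fun σ => tendsto_smallSets_of_tendsto_diam
    (fun _ => isBounded_of_compactSpace) (fun _ => mem_range_self (Γ σ)) (hyp σ) (hΓ σ (Γ σ))
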